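/- Let K be a field of characteristic 0, let ℓ ≥ 1, and let g be a Lie algebra over K that is generated by elements h_1,…,h_ℓ, x_1,…,x_ℓ, y_1,…,y_ℓ satisfying, for an integer matrix C = (C(j,i)) of size ℓ×ℓ, the relations [h_i,h_j] = 0, [h_i,x_j] = C(j,i)·x_j, [h_i,y_j] = −C(j,i)·y_j, and [x_i,y_j] = δ_{ij}·h_i for all 1 ≤ i,j ≤ ℓ. Let b_1,…,b_ℓ ∈ K be all nonzero, and for 1 ≤ j ≤ ℓ set v_j = Σ_{k=1}^ℓ C(j,k)·b_k ∈ K (the coordinates of Cb). Assume that the 2ℓ scalars v_1,…,v_ℓ, −v_1,…,−v_ℓ are pairwise distinct. Then the two elements x = x_1 + ⋯ + x_ℓ and y = b_1 y_1 + ⋯ + b_ℓ y_ℓ generate g as a Lie algebra. -/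

import Mathlib

/-!
The bracket `z = ⁅∑ xᵢ, ∑ bᵢ yᵢ⁆ = ∑ bᵢ hᵢ` lies in the generated subalgebra `S`, and each `xⱼ`
(resp. `yⱼ`) is an eigenvector of `ad z` with eigenvalue `vⱼ` (resp. `-vⱼ`). Since `S` is stable
under `ad z` and the `vⱼ` are distinct, separating eigencomponents
(`Submodule.mem_of_sum_eigenvectors_mem`) puts every `xⱼ` and every `bⱼ yⱼ` in `S`. As `bⱼ ≠ 0`,
also `yⱼ ∈ S`, and hence `hⱼ = ⁅xⱼ, yⱼ⁆ ∈ S`.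
-/

/-- A subspace stable under `f` that contains a sum of eigenvectors of `f` with distinct
eigenvalues contains each summand: apply `f - μ a` to remove one summand and induct. -/
lemma Submodule.mem_of_sum_eigenvectors_mem {K M ι : Type*} [Field K] [AddCommGroup M]
    [Module K M] (S : Submodule K M) (f : M → M) (hf : ∀ m ∈ S, f m ∈ S)
    (hadd : ∀ (t : Finset ι) (w : ι → M), f (∑ i ∈ t, w i) = ∑ i ∈ t, f (w i))
    (hsmul : ∀ (c : K) (m : M), f (c • m) = c • f m)
    (μ : ι → K) (hμ : Function.Injective μ) (s : Finset ι) :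
    ∀ w : ι → M, (∀ i, f (w i) = μ i • w i) → ∑ i ∈ s, w i ∈ S → ∀ i ∈ s, w i ∈ S := by
  classical
  induction s using Finset.induction_on with
  | empty => simp
  | insert a s ha ih =>
    intro w hw hS
    have key : ∀ i ∈ s, w i ∈ S := by
      intro i hi
      have h1 : ∑ i ∈ s, (μ i - μ a) • w i ∈ S := by
        have h2 := S.sub_mem (hf _ hS) (S.smul_mem (μ a) hS)
        rw [hadd, Finset.smul_sum, ← Finset.sum_sub_distrib, Finset.sum_insert ha] at h2
        simpa [hw, sub_smul] using h2
      have h3 := ih (fun i => (μ i - μ a) • w i)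
        (fun i => by rw [hsmul, hw, smul_comm]) h1 i hi
      have hne : μ i - μ a ≠ 0 :=
        sub_ne_zero.mpr fun e => ha (hμ e ▸ hi)
      exact (S.smul_mem_iff hne).mp h3
    intro i hi
    rcases Finset.mem_insert.mp hi with rfl | hi
    · rw [Finset.sum_insert ha] at hS
      exact (S.add_mem_iff_left (S.sum_mem key)).mp hS
    · exact key i hi


/-- If `h₁,…,h_ℓ, x₁,…,x_ℓ, y₁,…,y_ℓ` form a canonical generating set of a
Lie algebra `g` over a field `K` of characteristic zero (with integer Cartan-like matrix `C`),
`b₁,…,b_ℓ ∈ K` are nonzero, `v_j = ∑_k C(j,k) b_k`, and the `2ℓ` scalars `±v_j` are pairwise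
distinct, then `x = x₁ + ⋯ + x_ℓ` and `y = b₁ y₁ + ⋯ + b_ℓ y_ℓ` generate `g`. -/
theorem stmt1 (K : Type*) [Field K] [CharZero K]
    (L : Type*) [LieRing L] [LieAlgebra K L]
    (ℓ : ℕ) (hℓ : 1 ≤ ℓ)
    (h x y : Fin ℓ → L) (C : Fin ℓ → Fin ℓ → ℤ)
    (hgen : LieSubalgebra.lieSpan K L
      (Set.range h ∪ Set.range x ∪ Set.range y) = ⊤)
    (hhh : ∀ i j, ⁅h i, h j⁆ = 0)
    (hhx : ∀ i j, ⁅h i, x j⁆ = (C j i : K) • x j)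
    (hhy : ∀ i j, ⁅h i, y j⁆ = -(C j i : K) • y j)
    (hxy : ∀ i j, ⁅x i, y j⁆ = if i = j then h i else 0)
    (b : Fin ℓ → K) (hb : ∀ i, b i ≠ 0)
    (v : Fin ℓ → K) (hv : ∀ j, v j = ∑ k, (C j k : K) * b k)
    (hdist : Function.Injective fun p : Bool × Fin ℓ => if p.1 then v p.2 else -v p.2) :
    LieSubalgebra.lieSpan K L {∑ i, x i, ∑ i, b i • y i} = ⊤ := by
  set S := LieSubalgebra.lieSpan K L {∑ i, x i, ∑ i, b i • y i} with hSdef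
  have hxS : ∑ i, x i ∈ S := LieSubalgebra.subset_lieSpan (by simp)
  have hyS : ∑ i, b i • y i ∈ S := LieSubalgebra.subset_lieSpan (by simp)
  have hinj : Function.Injective v := fun i j e => by
    have := @hdist (true, i) (true, j) (by simpa using e)
    simpa using this
  have hzS : ∑ i, b i • h i ∈ S := by
    have h1 := S.lie_mem hxS hyS
    simpa [sum_lie, lie_sum, hxy] using h1
  have hzx : ∀ j, ⁅∑ i, b i • h i, x j⁆ = v j • x j := fun j => by
    simp only [sum_lie, smul_lie, hhx, smul_smul, ← Finset.sum_smul, hv]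
    simp only [mul_comm]
  have hzy : ∀ j, ⁅∑ i, b i • h i, b j • y j⁆ = (-v j) • (b j • y j) := fun j => by
    rw [lie_smul, smul_comm (-v j)]
    simp only [sum_lie, smul_lie, hhy, smul_smul, ← Finset.sum_smul, hv]
    simp [mul_comm]
  have hx : ∀ j, x j ∈ S := fun j =>
    S.toSubmodule.mem_of_sum_eigenvectors_mem (fun m => ⁅∑ i, b i • h i, m⁆)
      (fun m hm => S.lie_mem hzS hm) (fun t w => lie_sum ..) (fun c m => lie_smul ..)
      v hinj Finset.univ x hzx hxS j (Finset.mem_univ j)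
  have hy : ∀ j, y j ∈ S := fun j =>
    (S.toSubmodule.smul_mem_iff (hb j)).mp <|
      S.toSubmodule.mem_of_sum_eigenvectors_mem (fun m => ⁅∑ i, b i • h i, m⁆)
        (fun m hm => S.lie_mem hzS hm) (fun t w => lie_sum ..) (fun c m => lie_smul ..)
        (fun j => -v j) (neg_injective.comp hinj) Finset.univ (fun j => b j • y j) hzy hyS j
        (Finset.mem_univ j)
  have hh : ∀ j, h j ∈ S := fun j => by
    simpa [hxy] using S.lie_mem (hx j) (hy j)
  rw [eq_top_iff, ← hgen, LieSubalgebra.lieSpan_le]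
  rintro _ ((⟨j, rfl⟩ | ⟨j, rfl⟩) | ⟨j, rfl⟩)
  exacts [hh j, hx j, hy j]
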